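/- arXiv:1809.11162 — 2 statements merged into one kernel-verified Lean document; each statement's English description precedes it below -/
import Mathlib

section
/- Let ρ be a d-dimensional quantum state, let X be the random Hermitian matrix equal to (d+1)|v⟩⟨v| − I where v ∈ S^d is distributed with density v ↦ d·⟨v|ρ|v⟩ with respect to the uniform probability measure dv on the unit sphere of ℂ^d, and fix a unit vector z ∈ ℂ^d. Define the real random variable s_z = ⟨z| X − E[X] |z⟩. Then for every integer p ≥ 2, E[ |s_z|^p ] ≤ 27 · 6^{p−2} · p!. -/
/-!
Put `Y = (d + 1) |⟨z|v⟩|²`, so that `⟨z|X|z⟩ = Y - 1` and `s_z = Y - c` with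
`c = 1 + E[Y - 1]`. The bound rests on `E[Y ^ k] ≤ (k + 1)!` under the Born distribution
(`IsUniformSphereMeasure.born_moment_le`). The cases `k = 0, 1` give `0 ≤ c ≤ 3`, hence
`|Y - c| ^ p ≤ Y ^ p + 3 ^ p` and `E|s_z| ^ p ≤ (p + 1)! + 3 ^ p`, which is below
`27 * 6 ^ (p - 2) * p!`.

For the moments, only unitary invariance of the sphere measure is used. Let `m k` be the integral
of `|v i| ^ (2 k)`. Differentiating the invariance under rotations of the `(i, j)` plane at angle
`0` gives `m (k + 1) = (k + 1) ∫ |v i| ^ (2 k) |v j| ^ 2`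
(`IsUniformSphereMeasure.moment_succ_eq_mixed`); summing over `j` on the unit sphere turns this into
`(d + k) m (k + 1) = (k + 1) m k`, so `d (d + 1) ^ k m (k + 1) ≤ (k + 1)!`. Factoring
`ρ = Bᴴ B` writes the Born density as `d` times a sum of squared overlaps with the rows of `B`,
whose squared norms add up to `tr ρ = 1`. Each mixed moment `∫ |⟨b|v⟩|² |⟨z|v⟩| ^ (2 k)` with `b`,
`z` unit is at most `m (k + 1)` by weighted AM-GM, since pure moments do not depend on the direction.
-/

open MeasureTheory Matrix Finset
open scoped BigOperators Kronecker ComplexOrder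

noncomputable section

/-- The rank-one projector `|v⟩⟨v|`. -/
def projOp {ι : Type*} (v : ι → ℂ) : Matrix ι ι ℂ :=
  Matrix.vecMulVec v (star v)

/-- `μ` is the uniform (Haar-induced) probability measure on the unit sphere of `ℂ^d`:
it is a probability measure carried by the unit sphere that is invariant under every
unitary transformation.  (These properties determine it uniquely.) -/
def IsUniformSphereMeasure {d : ℕ} (μ : Measure (Fin d → ℂ)) : Prop :=
  IsProbabilityMeasure μ ∧
    μ {v | star v ⬝ᵥ v ≠ 1} = 0 ∧
    ∀ U : Matrix (Fin d) (Fin d) ℂ, U ∈ unitary (Matrix (Fin d) (Fin d) ℂ) →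
      Measure.map U.mulVec μ = μ

/-- The outcome distribution of the uniform POVM `{d |v⟩⟨v| dv}` on the state `ρ`:
the measure with density `v ↦ d ⟨v|ρ|v⟩` with respect to the uniform sphere measure. -/
def uniformBorn {d : ℕ} (μ : Measure (Fin d → ℂ)) (ρ : Matrix (Fin d) (Fin d) ℂ) :
    Measure (Fin d → ℂ) :=
  μ.withDensity fun v => ENNReal.ofReal ((d : ℝ) * (star v ⬝ᵥ ρ.mulVec v).re)

/-- The single-sample least-squares random matrix `X = (d+1)|v⟩⟨v| − I` for the
uniform POVM. -/
def uniformX {d : ℕ} (v : Fin d → ℂ) : Matrix (Fin d) (Fin d) ℂ :=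
  ((d : ℂ) + 1) • projOp v - 1

/-! ### Integration on the sphere and unitary invariance -/

lemma IsUniformSphereMeasure.ae_mem {d : ℕ} {μ : Measure (Fin d → ℂ)}
    (hμ : IsUniformSphereMeasure μ) : ∀ᵐ v ∂μ, star v ⬝ᵥ v = 1 := by
  rw [ae_iff]; exact hμ.2.1

lemma sum_norm_sq_of_unit {d : ℕ} {v : Fin d → ℂ} (hv : star v ⬝ᵥ v = 1) :
    ∑ i, ‖v i‖ ^ 2 = 1 := by
  have h : ((∑ i, ‖v i‖ ^ 2 : ℝ) : ℂ) = star v ⬝ᵥ v := by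
    simp [dotProduct, ← Complex.conj_mul']
  rw [hv] at h
  exact_mod_cast h

lemma isCompact_unit_vectors (d : ℕ) : IsCompact {v : Fin d → ℂ | star v ⬝ᵥ v = 1} := by
  refine (isCompact_closedBall (0 : Fin d → ℂ) 1).of_isClosed_subset ?_ ?_
  · exact isClosed_eq (by simp only [dotProduct, Pi.star_apply]; fun_prop) continuous_const
  · intro v hv
    rw [mem_closedBall_zero_iff, pi_norm_le_iff_of_nonneg zero_le_one]
    intro i
    have h1 := sum_norm_sq_of_unit hv
    have h2 : ‖v i‖ ^ 2 ≤ ∑ i, ‖v i‖ ^ 2 :=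
      Finset.single_le_sum (f := fun i => ‖v i‖ ^ 2) (fun j _ => by positivity) (Finset.mem_univ i)
    rw [h1] at h2
    exact (sq_le_one_iff₀ (norm_nonneg _)).1 h2

lemma IsUniformSphereMeasure.integrable {d : ℕ} {μ : Measure (Fin d → ℂ)}
    (hμ : IsUniformSphereMeasure μ) {E : Type*} [NormedAddCommGroup E]
    [SecondCountableTopology E]
    {f : (Fin d → ℂ) → E} (hf : Continuous f) : Integrable f μ := by
  have := hμ.1
  borelize E
  obtain ⟨C, hC⟩ := (isCompact_unit_vectors d).exists_bound_of_continuousOn hf.continuousOn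
  refine Integrable.of_bound hf.aestronglyMeasurable C ?_
  filter_upwards [hμ.ae_mem] with v hv using hC v hv

lemma IsUniformSphereMeasure.integral_mulVec {d : ℕ} {μ : Measure (Fin d → ℂ)}
    (hμ : IsUniformSphereMeasure μ) {E : Type*} [NormedAddCommGroup E] [NormedSpace ℝ E]
    [SecondCountableTopology E]
    {f : (Fin d → ℂ) → E} (hf : Continuous f) {U : Matrix (Fin d) (Fin d) ℂ}
    (hU : U ∈ unitary (Matrix (Fin d) (Fin d) ℂ)) :
    ∫ v, f (U.mulVec v) ∂μ = ∫ v, f v ∂μ := by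
  have hc : Continuous U.mulVec := by fun_prop
  conv_rhs => rw [← hμ.2.2 U hU]
  borelize E
  rw [integral_map hc.aemeasurable hf.aestronglyMeasurable]

/-- Moments of the squared overlap with a unit vector do not depend on the vector: a unitary whose
`i`-th row is `b` turns the overlap into the `i`-th coordinate. -/
lemma IsUniformSphereMeasure.moment_unit {d : ℕ} {μ : Measure (Fin d → ℂ)}
    (hμ : IsUniformSphereMeasure μ) (i : Fin d) (b : Fin d → ℂ) (hb : star b ⬝ᵥ b = 1) (k : ℕ) :
    ∫ v, ‖star b ⬝ᵥ v‖ ^ (2 * k) ∂μ = ∫ v, ‖v i‖ ^ (2 * k) ∂μ := by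
  have hn : ‖(WithLp.toLp 2 b : EuclideanSpace ℂ (Fin d))‖ = 1 := by
    rw [EuclideanSpace.norm_eq]
    simp [sum_norm_sq_of_unit hb]
  obtain ⟨e, he⟩ := Orthonormal.exists_orthonormalBasis_extension_of_card_eq (𝕜 := ℂ)
    (E := EuclideanSpace ℂ (Fin d)) (ι := Fin d) (by simp)
    (v := fun _ => WithLp.toLp 2 b) (s := {i}) (by
      rw [orthonormal_iff_ite]
      rintro ⟨a, ha⟩ ⟨c, hc⟩
      simp only [Set.mem_singleton_iff] at ha hc
      subst ha; subst hc
      simp [inner_self_eq_norm_sq_to_K, hn])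
  have hei : e i = WithLp.toLp 2 b := he i rfl
  set U : Matrix (Fin d) (Fin d) ℂ := Matrix.of fun a c => star (e a c) with hUdef
  have hU : U ∈ unitary (Matrix (Fin d) (Fin d) ℂ) := by
    refine Matrix.mem_unitaryGroup_iff.2 ?_
    ext a c
    have := orthonormal_iff_ite.1 e.orthonormal a c
    rw [PiLp.inner_apply] at this
    rw [Matrix.mul_apply, Matrix.one_apply, ← this]
    refine Finset.sum_congr rfl fun x _ => ?_
    simp [hUdef, Matrix.star_apply, mul_comm]
  rw [← hμ.integral_mulVec (f := fun v => ‖v i‖ ^ (2 * k)) (by fun_prop) hU]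
  refine integral_congr_ae (.of_forall fun v => ?_)
  simp [hUdef, Matrix.mulVec, hei, dotProduct]

/-! ### Rotations of a coordinate plane -/

/-- Rotation by the angle `t` in the plane of the coordinates `i` and `j`. -/
def planeRotation {d : ℕ} (i j : Fin d) (t : ℝ) : Matrix (Fin d) (Fin d) ℂ :=
  Matrix.of fun a b =>
    if a = i then (if b = i then (Real.cos t : ℂ) else if b = j then -(Real.sin t : ℂ) else 0)
    else if a = j then (if b = j then (Real.cos t : ℂ) else if b = i then (Real.sin t : ℂ) else 0)
    else if a = b then 1 else 0

lemma planeRotation_mulVec_fst {d : ℕ} {i j : Fin d} (hij : i ≠ j) (t : ℝ) (v : Fin d → ℂ) :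
    (planeRotation i j t).mulVec v i = Real.cos t * v i - Real.sin t * v j := by
  have : ∀ b, (planeRotation i j t) i b * v b =
      (if b = i then (Real.cos t : ℂ) * v b else 0) -
        (if b = j then (Real.sin t : ℂ) * v b else 0) := by
    intro b
    simp only [planeRotation, Matrix.of_apply]
    split_ifs <;> simp_all
  simp only [Matrix.mulVec, dotProduct, this, Finset.sum_sub_distrib]
  simp

lemma planeRotation_mulVec_snd {d : ℕ} {i j : Fin d} (hij : i ≠ j) (t : ℝ) (v : Fin d → ℂ) :
    (planeRotation i j t).mulVec v j = Real.cos t * v j + Real.sin t * v i := by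
  have : ∀ b, (planeRotation i j t) j b * v b =
      (if b = j then (Real.cos t : ℂ) * v b else 0) +
        (if b = i then (Real.sin t : ℂ) * v b else 0) := by
    intro b
    simp only [planeRotation, Matrix.of_apply]
    split_ifs <;> simp_all
  simp only [Matrix.mulVec, dotProduct, this, Finset.sum_add_distrib]
  simp

lemma planeRotation_mulVec_other {d : ℕ} {i j a : Fin d} (hi : a ≠ i) (hj : a ≠ j) (t : ℝ)
    (v : Fin d → ℂ) : (planeRotation i j t).mulVec v a = v a := by
  simp [Matrix.mulVec, dotProduct, planeRotation, hi, hj]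

lemma planeRotation_mem_unitary {d : ℕ} {i j : Fin d} (hij : i ≠ j) (t : ℝ) :
    planeRotation i j t ∈ unitary (Matrix (Fin d) (Fin d) ℂ) := by
  have hcs : (Complex.cos t) * Complex.cos t + Complex.sin t * Complex.sin t = 1 := by
    have := Complex.sin_sq_add_cos_sq t
    linear_combination this
  have hst : star (planeRotation i j t) = planeRotation i j (-t) := by
    ext a b
    rw [Matrix.star_apply]
    simp only [planeRotation, Matrix.of_apply]
    by_cases ai : a = i <;> by_cases aj : a = j <;> by_cases bi : b = i <;> by_cases bj : b = j <;>
      simp [ai, aj, bi, bj, hij, hij.symm, -Complex.ofReal_cos, -Complex.ofReal_sin]; grind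
  refine Matrix.mem_unitaryGroup_iff.2 ?_
  rw [hst]
  refine Matrix.toLin'.injective (LinearMap.ext fun v => ?_)
  simp only [Matrix.toLin'_apply, ← Matrix.mulVec_mulVec, Matrix.one_mulVec]
  funext a
  by_cases hi : a = i
  · subst hi
    rw [planeRotation_mulVec_fst hij, planeRotation_mulVec_fst hij, planeRotation_mulVec_snd hij]
    push_cast
    simp only [Complex.cos_neg, Complex.sin_neg]
    linear_combination (v a) * hcs
  by_cases hj : a = j
  · subst hj
    rw [planeRotation_mulVec_snd hij, planeRotation_mulVec_fst hij, planeRotation_mulVec_snd hij]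
    push_cast
    simp only [Complex.cos_neg, Complex.sin_neg]
    linear_combination (v a) * hcs
  rw [planeRotation_mulVec_other hi hj, planeRotation_mulVec_other hi hj]

/-! ### Moments of one coordinate -/

/-- The key relation between mixed and pure moments. It is the first-order term of invariance under
rotations in the `(i, j)` plane, applied to `x ^ k * conj x ^ (k + 1) * y`; the term containing
`y ^ 2` drops out by the phase change `y ↦ I * y`. -/
lemma IsUniformSphereMeasure.moment_succ_eq_mixed {d : ℕ} {μ : Measure (Fin d → ℂ)}
    (hμ : IsUniformSphereMeasure μ) {i j : Fin d} (hij : i ≠ j) (k : ℕ) :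
    ∫ v, ‖v i‖ ^ (2 * (k + 1)) ∂μ = (k + 1) * ∫ v, ‖v i‖ ^ (2 * k) * ‖v j‖ ^ 2 ∂μ := by
  have := hμ.1
  set G : ℝ → (Fin d → ℂ) → ℂ := fun t v =>
    (Real.cos t * v i - Real.sin t * v j) ^ k *
      (Real.cos t * star (v i) - Real.sin t * star (v j)) ^ (k + 1) *
      (Real.cos t * v j + Real.sin t * v i) with hG
  set G' : ℝ → (Fin d → ℂ) → ℂ := fun t v =>
    ((k * (Real.cos t * v i - Real.sin t * v j) ^ (k - 1) *
        (-Real.sin t * v i - Real.cos t * v j)) *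
      (Real.cos t * star (v i) - Real.sin t * star (v j)) ^ (k + 1) +
     (Real.cos t * v i - Real.sin t * v j) ^ k *
      ((k + 1 : ℕ) * (Real.cos t * star (v i) - Real.sin t * star (v j)) ^ k *
        (-Real.sin t * star (v i) - Real.cos t * star (v j)))) *
      (Real.cos t * v j + Real.sin t * v i) +
    (Real.cos t * v i - Real.sin t * v j) ^ k *
      (Real.cos t * star (v i) - Real.sin t * star (v j)) ^ (k + 1) *
      (-Real.sin t * v j + Real.cos t * v i) with hG'
  have hder : ∀ t v, HasDerivAt (G · v) (G' t v) t := by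
    intro t v
    have hc : HasDerivAt (fun t : ℝ => (Real.cos t : ℂ)) (-(Real.sin t : ℂ)) t := by
      simpa using (Real.hasDerivAt_cos t).ofReal_comp
    have hs : HasDerivAt (fun t : ℝ => (Real.sin t : ℂ)) (Real.cos t : ℂ) t :=
      (Real.hasDerivAt_sin t).ofReal_comp
    exact (((hc.mul_const (v i)).sub (hs.mul_const (v j))).pow k |>.mul
      (((hc.mul_const (star (v i))).sub (hs.mul_const (star (v j)))).pow (k + 1))).mul
      ((hc.mul_const (v j)).add (hs.mul_const (v i)))
  have hcont : Continuous fun q : ℝ × (Fin d → ℂ) => G' q.1 q.2 := by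
    simp only [hG']; fun_prop
  have hconst : ∀ t, ∫ v, G t v ∂μ = ∫ v, G 0 v ∂μ := by
    intro t
    rw [← hμ.integral_mulVec (f := G 0) (by simp only [hG]; fun_prop)
      (planeRotation_mem_unitary hij t)]
    refine integral_congr_ae (.of_forall fun v => ?_)
    simp only [hG]
    rw [planeRotation_mulVec_fst hij, planeRotation_mulVec_snd hij]
    simp [← Complex.cos_conj, ← Complex.sin_conj]
  obtain ⟨C, hC⟩ := ((isCompact_Icc (a := (-1 : ℝ)) (b := 1)).prod
    (isCompact_unit_vectors d)).exists_bound_of_continuousOn hcont.continuousOn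
  have hzero : ∫ v, G' 0 v ∂μ = 0 := by
    have h1 := (hasDerivAt_integral_of_dominated_loc_of_deriv_le (μ := μ) (F := G) (F' := G')
      (x₀ := (0 : ℝ)) (s := Set.Icc (-1) 1) (bound := fun _ => C)
      (Icc_mem_nhds (by norm_num) (by norm_num))
      (.of_forall fun t => (Continuous.aestronglyMeasurable (by simp only [hG]; fun_prop)))
      (hμ.integrable (by simp only [hG]; fun_prop))
      (Continuous.aestronglyMeasurable (by simp only [hG']; fun_prop))
      (by filter_upwards [hμ.ae_mem] with v hv t ht using hC (t, v) ⟨ht, hv⟩)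
      (integrable_const C) (.of_forall fun v t _ => hder t v)).2
    have h2 : (fun t => ∫ v, G t v ∂μ) = fun _ => ∫ v, G 0 v ∂μ := funext hconst
    rw [h2] at h1
    exact h1.unique (hasDerivAt_const _ _)
  set H : (Fin d → ℂ) → ℂ := fun v => v i ^ (k - 1) * star (v i) ^ (k + 1) * v j ^ 2 with hH
  have hHc : Continuous H := by simp only [hH]; fun_prop
  have hH0 : ∫ v, H v ∂μ = 0 := by
    set D : Matrix (Fin d) (Fin d) ℂ :=
      Matrix.diagonal fun a => if a = j then Complex.I else 1 with hD
    have hDu : D ∈ unitary (Matrix (Fin d) (Fin d) ℂ) := by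
      refine Matrix.mem_unitaryGroup_iff.2 ?_
      rw [hD, Matrix.star_eq_conjTranspose, Matrix.diagonal_conjTranspose,
        Matrix.diagonal_mul_diagonal, ← Matrix.diagonal_one]
      congr 1
      funext a
      by_cases h : a = j <;> simp [h]
    have h1 := hμ.integral_mulVec hHc hDu
    have h2 : ∀ v, H (D.mulVec v) = - H v := by
      intro v
      simp only [hH, hD, Matrix.mulVec_diagonal, if_neg hij, if_true, mul_pow, Complex.I_sq]
      ring_nf
    simp only [h2, integral_neg] at h1
    linear_combination (-1 / 2 : ℂ) * h1
  have hpt : ∀ v, G' 0 v = ((‖v i‖ ^ (2 * (k + 1)) : ℝ) : ℂ) -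
      (k + 1) * ((‖v i‖ ^ (2 * k) * ‖v j‖ ^ 2 : ℝ) : ℂ) - k * H v := by
    intro v
    have e1 : ∀ x : ℂ, (‖x‖ : ℂ) ^ 2 = x * star x := fun x => (Complex.mul_conj' x).symm
    simp only [hG', hH, Real.cos_zero, Real.sin_zero]
    push_cast
    rw [pow_mul, pow_mul, e1, e1]
    ring
  simp only [hpt] at hzero
  have i1 : Integrable (fun v : Fin d → ℂ => ((‖v i‖ ^ (2 * (k + 1)) : ℝ) : ℂ)) μ :=
    hμ.integrable (by fun_prop)
  have i2 : Integrable (fun v : Fin d → ℂ =>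
      ((k : ℂ) + 1) * ((‖v i‖ ^ (2 * k) * ‖v j‖ ^ 2 : ℝ) : ℂ)) μ :=
    hμ.integrable (by fun_prop)
  have i3 : Integrable (fun v => (k : ℂ) * H v) μ := hμ.integrable (by fun_prop)
  have i12 : Integrable (fun v : Fin d → ℂ => ((‖v i‖ ^ (2 * (k + 1)) : ℝ) : ℂ) -
      ((k : ℂ) + 1) * ((‖v i‖ ^ (2 * k) * ‖v j‖ ^ 2 : ℝ) : ℂ)) μ := i1.sub i2
  rw [integral_sub i12 i3, integral_sub i1 i2, integral_const_mul, integral_const_mul,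
    hH0, integral_complex_ofReal, integral_complex_ofReal, mul_zero, sub_zero, sub_eq_zero] at hzero
  exact_mod_cast hzero

/-- The recursion for the moments of one coordinate, obtained by summing the mixed moments
over `j` and using `∑ j, ‖v j‖ ^ 2 = 1`. -/
lemma IsUniformSphereMeasure.moment_recursion {d : ℕ} {μ : Measure (Fin d → ℂ)}
    (hμ : IsUniformSphereMeasure μ) (i : Fin d) (k : ℕ) :
    (d + k) * ∫ v, ‖v i‖ ^ (2 * (k + 1)) ∂μ = (k + 1) * ∫ v, ‖v i‖ ^ (2 * k) ∂μ := by
  have h1 : ∫ v, ‖v i‖ ^ (2 * k) ∂μ = ∑ j, ∫ v, ‖v i‖ ^ (2 * k) * ‖v j‖ ^ 2 ∂μ := by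
    rw [← integral_finsetSum _ (fun j _ => hμ.integrable (by fun_prop))]
    refine integral_congr_ae ?_
    filter_upwards [hμ.ae_mem] with v hv
    rw [← Finset.mul_sum, sum_norm_sq_of_unit hv, mul_one]
  have h2 : ∀ j, (k + 1) * ∫ v, ‖v i‖ ^ (2 * k) * ‖v j‖ ^ 2 ∂μ =
      (∫ v, ‖v i‖ ^ (2 * (k + 1)) ∂μ) +
        if j = i then k * ∫ v, ‖v i‖ ^ (2 * (k + 1)) ∂μ else 0 := by
    intro j
    by_cases h : j = i
    · subst h
      have : ∀ v : Fin d → ℂ, ‖v j‖ ^ (2 * k) * ‖v j‖ ^ 2 = ‖v j‖ ^ (2 * (k + 1)) := by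
        intro v; ring
      simp only [this, if_true]; ring
    · rw [if_neg h, add_zero, ← hμ.moment_succ_eq_mixed (Ne.symm h)]
  rw [h1, Finset.mul_sum, Finset.sum_congr rfl fun j _ => h2 j, Finset.sum_add_distrib]
  simp
  ring

lemma IsUniformSphereMeasure.moment_le {d : ℕ} {μ : Measure (Fin d → ℂ)}
    (hμ : IsUniformSphereMeasure μ) (i : Fin d) (k : ℕ) :
    d * (d + 1 : ℝ) ^ k * ∫ v, ‖v i‖ ^ (2 * (k + 1)) ∂μ ≤ (k + 1).factorial := by
  have := hμ.1
  induction k with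
  | zero =>
    have := hμ.moment_recursion i 0
    simp at this ⊢
    exact this.le
  | succ k ih =>
    have h := hμ.moment_recursion i (k + 1)
    set a := ∫ v, ‖v i‖ ^ (2 * (k + 1)) ∂μ
    set b := ∫ v, ‖v i‖ ^ (2 * (k + 1 + 1)) ∂μ
    have hb : 0 ≤ b := integral_nonneg fun v => by positivity
    have h1 : (d + 1 : ℝ) * b ≤ (k + 2) * a := by
      push_cast at h
      have hk : (0 : ℝ) ≤ k := by positivity
      nlinarith
    calc (d : ℝ) * (d + 1 : ℝ) ^ (k + 1) * b = d * (d + 1 : ℝ) ^ k * ((d + 1) * b) := by ring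
      _ ≤ d * (d + 1 : ℝ) ^ k * ((k + 2) * a) := by gcongr
      _ = (k + 2) * (d * (d + 1 : ℝ) ^ k * a) := by ring
      _ ≤ (k + 2) * (k + 1).factorial := by gcongr
      _ = (k + 1 + 1).factorial := by
        rw [Nat.factorial_succ (k + 1)]; push_cast; ring

/-! ### Moments under the Born distribution -/

lemma weighted_amgm {a b : ℝ} (ha : 0 ≤ a) (hb : 0 ≤ b) (k : ℕ) :
    (k + 1) * (a * b ^ k) ≤ a ^ (k + 1) + k * b ^ (k + 1) := by
  induction k with
  | zero => simp
  | succ k ih =>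
    have h1 := mul_le_mul_of_nonneg_left ih ha
    have h2 : 0 ≤ (k + 1) * b ^ k * (a - b) ^ 2 := by positivity
    push_cast
    ring_nf at h1 h2 ⊢
    linarith

lemma IsUniformSphereMeasure.mixed_le_unit {d : ℕ} {μ : Measure (Fin d → ℂ)}
    (hμ : IsUniformSphereMeasure μ) (i : Fin d) {b z : Fin d → ℂ} (hb : star b ⬝ᵥ b = 1)
    (hz : star z ⬝ᵥ z = 1) (k : ℕ) :
    ∫ v, ‖star b ⬝ᵥ v‖ ^ 2 * ‖star z ⬝ᵥ v‖ ^ (2 * k) ∂μ ≤ ∫ v, ‖v i‖ ^ (2 * (k + 1)) ∂μ := by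
  have hcd : ∀ c : Fin d → ℂ, Continuous fun v : Fin d → ℂ => star c ⬝ᵥ v := by
    intro c; simp only [dotProduct]; fun_prop
  have hcb := hcd b
  have hcz := hcd z
  have h : ∫ v, (k + 1) * (‖star b ⬝ᵥ v‖ ^ 2 * ‖star z ⬝ᵥ v‖ ^ (2 * k)) ∂μ ≤
      ∫ v, (‖star b ⬝ᵥ v‖ ^ (2 * (k + 1)) + k * ‖star z ⬝ᵥ v‖ ^ (2 * (k + 1))) ∂μ := by
    refine integral_mono (hμ.integrable (by fun_prop)) (hμ.integrable (by fun_prop)) fun v => ?_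
    simp only [pow_mul]
    exact weighted_amgm (by positivity) (by positivity) k
  rw [integral_const_mul, integral_add (hμ.integrable (by fun_prop))
    (hμ.integrable (by fun_prop)), integral_const_mul, hμ.moment_unit i b hb,
    hμ.moment_unit i z hz] at h
  have hk : (0 : ℝ) < k + 1 := by positivity
  refine le_of_mul_le_mul_left ?_ hk
  linarith

lemma IsUniformSphereMeasure.mixed_le {d : ℕ} {μ : Measure (Fin d → ℂ)}
    (hμ : IsUniformSphereMeasure μ) (i : Fin d) (b : Fin d → ℂ) {z : Fin d → ℂ}
    (hz : star z ⬝ᵥ z = 1) (k : ℕ) :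
    ∫ v, ‖b ⬝ᵥ v‖ ^ 2 * ‖star z ⬝ᵥ v‖ ^ (2 * k) ∂μ ≤
      (∑ a, ‖b a‖ ^ 2) * ∫ v, ‖v i‖ ^ (2 * (k + 1)) ∂μ := by
  set s := ∑ a, ‖b a‖ ^ 2 with hs
  have hs0 : 0 ≤ s := by positivity
  rcases hs0.eq_or_lt with h0 | hpos
  · have hb : b = 0 := by
      funext a
      have := (Finset.sum_eq_zero_iff_of_nonneg (fun a _ => by positivity)).1 h0.symm a
        (Finset.mem_univ a)
      simpa using this
    simp [hb, ← h0]
  · set r : ℝ := Real.sqrt s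
    have hr : 0 < r := Real.sqrt_pos.2 hpos
    have hr2 : r ^ 2 = s := Real.sq_sqrt hs0
    set c : Fin d → ℂ := (r : ℂ)⁻¹ • star b with hc
    have hbc : ∀ v, ‖b ⬝ᵥ v‖ ^ 2 = s * ‖star c ⬝ᵥ v‖ ^ 2 := by
      intro v
      rw [hc, star_smul, star_star, smul_dotProduct, norm_smul, mul_pow, ← hr2]
      simp
      field_simp
    have hcu : star c ⬝ᵥ c = 1 := by
      have h1 : b ⬝ᵥ star b = (r : ℂ) ^ 2 := by
        rw [← Complex.ofReal_pow, hr2, hs]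
        simp [dotProduct, ← Complex.mul_conj']
      have : (r : ℂ) ≠ 0 := by exact_mod_cast hr.ne'
      rw [hc, star_smul, star_star, smul_dotProduct, dotProduct_smul, h1]
      simp
      field_simp
    simp only [hbc, mul_assoc]
    rw [integral_const_mul]
    exact mul_le_mul_of_nonneg_left (hμ.mixed_le_unit i hcu hz k) hs0

lemma re_uniformX {d : ℕ} {z : Fin d → ℂ} (hz : star z ⬝ᵥ z = 1) (v : Fin d → ℂ) :
    (star z ⬝ᵥ (uniformX v).mulVec z).re = (d + 1) * ‖star z ⬝ᵥ v‖ ^ 2 - 1 := by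
  have h1 : star v ⬝ᵥ z = star (star z ⬝ᵥ v) := by
    simp [dotProduct, mul_comm]
  have h2 : star z ⬝ᵥ (uniformX v).mulVec z =
      (((d + 1) * ‖star z ⬝ᵥ v‖ ^ 2 - 1 : ℝ) : ℂ) := by
    rw [uniformX, projOp, Matrix.sub_mulVec, Matrix.one_mulVec, Matrix.smul_mulVec,
      Matrix.vecMulVec_mulVec, dotProduct_sub, hz, dotProduct_smul, h1]
    push_cast
    rw [← Complex.conj_mul']
    simp
  rw [h2, Complex.ofReal_re]

lemma re_conjTranspose_mul_self {d : ℕ} (B : Matrix (Fin d) (Fin d) ℂ) (v : Fin d → ℂ) :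
    (star v ⬝ᵥ (Bᴴ * B).mulVec v).re = ∑ i, ‖B i ⬝ᵥ v‖ ^ 2 := by
  have h : star v ⬝ᵥ (Bᴴ * B).mulVec v = ((∑ i, ‖B i ⬝ᵥ v‖ ^ 2 : ℝ) : ℂ) := by
    rw [← Matrix.mulVec_mulVec, Matrix.dotProduct_mulVec, ← Matrix.star_mulVec]
    simp [dotProduct, Matrix.mulVec, ← Complex.conj_mul']
  rw [h, Complex.ofReal_re]

/-- Moment bound for `Y = (d + 1) |⟨z|v⟩|²` under the Born distribution, written as an integral
against the uniform measure: `E[Y ^ k] ≤ (k + 1)!`. -/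
lemma IsUniformSphereMeasure.born_moment_le {d : ℕ} (hd : 0 < d) {μ : Measure (Fin d → ℂ)}
    (hμ : IsUniformSphereMeasure μ) {ρ : Matrix (Fin d) (Fin d) ℂ}
    (hρ : ρ.PosSemidef ∧ ρ.trace = 1) {z : Fin d → ℂ} (hz : star z ⬝ᵥ z = 1) (k : ℕ) :
    ∫ v, (d * (star v ⬝ᵥ ρ.mulVec v).re) * ((d + 1) * ‖star z ⬝ᵥ v‖ ^ 2) ^ k ∂μ ≤
      ((k + 1).factorial : ℝ) := by
  obtain ⟨B, hB⟩ : ∃ B : Matrix (Fin d) (Fin d) ℂ, ρ = Bᴴ * B := by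
    open scoped MatrixOrder Matrix.Norms.L2Operator in
    exact CStarAlgebra.nonneg_iff_eq_star_mul_self.mp hρ.1.nonneg
  have htr : ∑ i, ∑ a, ‖B i a‖ ^ 2 = 1 := by
    have h : ((∑ i, ∑ a, ‖B i a‖ ^ 2 : ℝ) : ℂ) = ρ.trace := by
      rw [hB, Matrix.trace_mul_comm]
      simp [Matrix.trace, Matrix.mul_apply, ← Complex.mul_conj']
    rw [hρ.2] at h
    exact_mod_cast h
  have hcd : ∀ c : Fin d → ℂ, Continuous fun v : Fin d → ℂ => c ⬝ᵥ v := by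
    intro c; simp only [dotProduct]; fun_prop
  have hcz := hcd (star z)
  have hpt : ∀ v, (d * (star v ⬝ᵥ ρ.mulVec v).re) * ((d + 1) * ‖star z ⬝ᵥ v‖ ^ 2) ^ k =
      d * (d + 1 : ℝ) ^ k * ∑ i, ‖B i ⬝ᵥ v‖ ^ 2 * ‖star z ⬝ᵥ v‖ ^ (2 * k) := by
    intro v
    rw [hB, re_conjTranspose_mul_self, ← Finset.sum_mul, pow_mul, mul_pow]
    ring
  simp only [hpt]
  rw [integral_const_mul, integral_finsetSum _ (fun i _ => hμ.integrable (by
    have := hcd (B i); fun_prop))]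
  refine le_trans ?_ (hμ.moment_le ⟨0, hd⟩ k)
  gcongr
  calc _ ≤ ∑ i, (∑ a, ‖B i a‖ ^ 2) * ∫ v, ‖v ⟨0, hd⟩‖ ^ (2 * (k + 1)) ∂μ :=
        Finset.sum_le_sum fun i _ => hμ.mixed_le ⟨0, hd⟩ (B i) hz k
    _ = _ := by rw [← Finset.sum_mul, htr, one_mul]

lemma continuous_quadForm {d : ℕ} (ρ : Matrix (Fin d) (Fin d) ℂ) :
    Continuous fun v : Fin d → ℂ => (star v ⬝ᵥ ρ.mulVec v).re := by
  simp only [dotProduct, Matrix.mulVec]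
  fun_prop

lemma integral_uniformBorn {d : ℕ} (μ : Measure (Fin d → ℂ)) {ρ : Matrix (Fin d) (Fin d) ℂ}
    (hρ : ρ.PosSemidef) (f : (Fin d → ℂ) → ℝ) :
    ∫ v, f v ∂(uniformBorn μ ρ) = ∫ v, (d * (star v ⬝ᵥ ρ.mulVec v).re) * f v ∂μ := by
  have hc := continuous_quadForm ρ
  rw [uniformBorn, integral_withDensity_eq_integral_toReal_smul
    (by fun_prop) (.of_forall fun _ => ENNReal.ofReal_lt_top)]
  refine integral_congr_ae (.of_forall fun v => ?_)
  have h0 : 0 ≤ (star v ⬝ᵥ ρ.mulVec v).re := hρ.re_dotProduct_nonneg v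
  simp only [smul_eq_mul]
  rw [ENNReal.toReal_ofReal (by positivity)]

lemma abs_sub_pow_le {y c C : ℝ} (hy : 0 ≤ y) (hc : 0 ≤ c) (hC : c ≤ C) (p : ℕ) :
    |y - c| ^ p ≤ y ^ p + C ^ p := by
  have hC0 : 0 ≤ C := hc.trans hC
  rcases le_total y c with h | h
  · have : |y - c| ≤ C := by rw [abs_le]; constructor <;> linarith
    have := pow_le_pow_left₀ (abs_nonneg _) this p
    have : 0 ≤ y ^ p := by positivity
    linarith
  · have : |y - c| ≤ y := by rw [abs_le]; constructor <;> linarith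
    have := pow_le_pow_left₀ (abs_nonneg _) this p
    have : 0 ≤ C ^ p := by positivity
    linarith

lemma factorial_add_pow_le {p : ℕ} (hp : 2 ≤ p) :
    ((p + 1).factorial : ℝ) + 3 ^ p ≤ 27 * 6 ^ (p - 2) * p.factorial := by
  obtain ⟨q, rfl⟩ := Nat.exists_eq_add_of_le' hp
  have h1 : (q : ℝ) + 3 ≤ 3 * 6 ^ q := by
    have := one_add_mul_le_pow (a := (5 : ℝ)) (by norm_num) q
    norm_num at this
    have hq : (0 : ℝ) ≤ q := by positivity
    linarith
  have h2 : (3 : ℝ) ^ q ≤ 6 ^ q := pow_le_pow_left₀ (by norm_num) (by norm_num) q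
  have h3 : (1 : ℝ) ≤ (q + 2).factorial := by exact_mod_cast (q + 2).factorial_pos
  have h4 : (0 : ℝ) ≤ 6 ^ q := by positivity
  rw [Nat.factorial_succ (q + 2), Nat.add_sub_cancel]
  push_cast
  have h5 := mul_le_mul_of_nonneg_right h1 (zero_le_one.trans h3)
  have h6 := mul_le_mul_of_nonneg_left h3 h4
  rw [pow_add]
  nlinarith

/-- moment growth of the centered random variable
`s_z = ⟨z|X − E[X]|z⟩` for the uniform POVM (Lemma 4 of the appendix). -/
theorem uniformPOVM_moment_bound {d : ℕ} (hd : 0 < d)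
    (ρ : Matrix (Fin d) (Fin d) ℂ) (hρ : ρ.PosSemidef ∧ ρ.trace = 1)
    (μ : Measure (Fin d → ℂ)) (hμ : IsUniformSphereMeasure μ)
    (z : Fin d → ℂ) (hz : star z ⬝ᵥ z = 1)
    (p : ℕ) (hp : 2 ≤ p) :
    (∫ v, |(star z ⬝ᵥ (uniformX v).mulVec z).re -
        ∫ w, (star z ⬝ᵥ (uniformX w).mulVec z).re ∂(uniformBorn μ ρ)| ^ p
      ∂(uniformBorn μ ρ)) ≤ 27 * 6 ^ (p - 2) * p.factorial := by
  have hq := continuous_quadForm ρ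
  have hcz : Continuous fun v : Fin d → ℂ => star z ⬝ᵥ v := by
    simp only [dotProduct]; fun_prop
  have hw : ∀ v, 0 ≤ d * (star v ⬝ᵥ ρ.mulVec v).re := fun v =>
    mul_nonneg (by positivity) (hρ.1.re_dotProduct_nonneg v)
  have hmass := hμ.born_moment_le hd hρ hz 0
  have hmean := hμ.born_moment_le hd hρ hz 1
  have hpow := hμ.born_moment_le hd hρ hz p
  set w : (Fin d → ℂ) → ℝ := fun v => d * (star v ⬝ᵥ ρ.mulVec v).re with hwdef
  set Y : (Fin d → ℂ) → ℝ := fun v => (d + 1) * ‖star z ⬝ᵥ v‖ ^ 2 with hYdef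
  have hwc : Continuous w := by simp only [hwdef]; fun_prop
  have hYc : Continuous Y := by simp only [hYdef]; fun_prop
  have hY0 : ∀ v, 0 ≤ Y v := fun v => by simp only [hYdef]; positivity
  simp only [pow_zero, mul_one, zero_add, Nat.factorial_one, Nat.cast_one] at hmass
  norm_num at hmean
  have hmass' : ∫ v, w v ∂μ ≤ 1 := hmass
  have hmean' : ∫ v, w v * Y v ∂μ ≤ 2 := hmean
  have hpow' : ∫ v, w v * Y v ^ p ∂μ ≤ (p + 1).factorial := hpow
  have hmass0 : 0 ≤ ∫ v, w v ∂μ := integral_nonneg hw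
  have hmean0 : 0 ≤ ∫ v, w v * Y v ∂μ := integral_nonneg fun v => mul_nonneg (hw v) (hY0 v)
  set m := ∫ w, (star z ⬝ᵥ (uniformX w).mulVec z).re ∂(uniformBorn μ ρ) with hm
  have hmval : m = ∫ v, w v * Y v ∂μ - ∫ v, w v ∂μ := by
    rw [hm, integral_uniformBorn μ hρ.1, ← integral_sub (hμ.integrable (by fun_prop))
      (hμ.integrable hwc)]
    refine integral_congr_ae (.of_forall fun v => ?_)
    simp only [re_uniformX hz, hwdef, hYdef]
    ring
  rw [integral_uniformBorn μ hρ.1]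
  -- Only `0 ≤ 1 + m ≤ 3` is needed, so the total mass of the Born measure need not be computed.
  have hbound : ∀ v, w v * |(star z ⬝ᵥ (uniformX v).mulVec z).re - m| ^ p ≤
      w v * Y v ^ p + 3 ^ p * w v := by
    intro v
    have h1 : (star z ⬝ᵥ (uniformX v).mulVec z).re - m = Y v - (1 + m) := by
      rw [re_uniformX hz]; simp only [hYdef]; ring
    have h2 := mul_le_mul_of_nonneg_left (abs_sub_pow_le (hY0 v) (c := 1 + m) (C := 3)
      (by linarith) (by linarith) p) (hw v)
    rw [h1]
    calc _ ≤ _ := h2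
      _ = _ := by ring
  calc _ ≤ ∫ v, (w v * Y v ^ p + 3 ^ p * w v) ∂μ := by
        refine integral_mono (hμ.integrable ?_) (hμ.integrable (by fun_prop)) hbound
        simp only [re_uniformX hz]
        fun_prop
    _ = (∫ v, w v * Y v ^ p ∂μ) + 3 ^ p * ∫ v, w v ∂μ := by
        rw [integral_add (hμ.integrable (by fun_prop)) (hμ.integrable (by fun_prop)),
          integral_const_mul]
    _ ≤ (p + 1).factorial + 3 ^ p * 1 := by gcongr
    _ ≤ _ := by rw [mul_one]; exact factorial_add_pow_le hp

end
end

section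
/- Let k ∈ ℕ and d = 2^k. For each setting s ∈ {x,y,z}^k and outcome o ∈ {+1,−1}^k let |b_o^{(s)}⟩ = ⊗_{i=1}^k |b_{o_i}^{(s_i)}⟩ be the corresponding Pauli product-basis vector. Then for every d×d complex matrix X, Σ_{s ∈ {x,y,z}^k} Σ_{o ∈ {±1}^k} ⟨b_o^{(s)}|X|b_o^{(s)}⟩ · |b_o^{(s)}⟩⟨b_o^{(s)}| = 3^k · D_{1/3}^{⊗k}(X), where D_{1/3}^{⊗k} is the k-fold tensor power of the single-qubit depolarizing channel D_{1/3}. -/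
/-!
Each side is linear in `X`, so it suffices to compare the coefficient of `X c e` in the
`(a, b)` entry. On both sides this coefficient is a sum, over tuples of labels, of products over
the qubits; exchanging sum and product (`Fintype.prod_sum`) turns it into a product of one-qubit
coefficients. The theorem thus reduces to its one-qubit case `bvec_frame_entry`, a finite check:
the coefficients both equal `[a = c] [e = b] + [a = b] [c = e]`, i.e. those of `Y + tr(Y) I₂`.
-/

open MeasureTheory Matrix Finset
open scoped BigOperators Kronecker ComplexOrder

noncomputable section

/-- The four elementary single-qubit Pauli matrices `I, σ_x, σ_y, σ_z`. -/
def pauli1 : Fin 4 → Matrix (Fin 2) (Fin 2) ℂ :=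
  ![1, !![0, 1; 1, 0], !![0, -Complex.I; Complex.I, 0], !![1, 0; 0, -1]]

/-- The `k`-qubit Pauli matrix `W_g = σ_{g 1} ⊗ ⋯ ⊗ σ_{g k}`. -/
def pauliK {k : ℕ} (g : Fin k → Fin 4) : Matrix (Fin k → Fin 2) (Fin k → Fin 2) ℂ :=
  fun a b => ∏ t, pauli1 (g t) (a t) (b t)

/-- Normalized eigenvectors of the single-qubit Pauli matrices `σ_x, σ_y, σ_z`
(settings `0 ↦ x`, `1 ↦ y`, `2 ↦ z`); `true` encodes the `+1` eigenvector and
`false` the `−1` eigenvector. -/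
def bvec : Fin 3 → Bool → Fin 2 → ℂ :=
  ![fun o => ![((Real.sqrt 2 : ℝ) : ℂ)⁻¹,
      if o then ((Real.sqrt 2 : ℝ) : ℂ)⁻¹ else -((Real.sqrt 2 : ℝ) : ℂ)⁻¹],
    fun o => ![((Real.sqrt 2 : ℝ) : ℂ)⁻¹,
      (if o then Complex.I else -Complex.I) * ((Real.sqrt 2 : ℝ) : ℂ)⁻¹],
    fun o => if o then ![1, 0] else ![0, 1]]

/-- The Pauli product-basis vector `|b_o^{(s)}⟩ = ⊗_i |b_{o_i}^{(s_i)}⟩`. -/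
def basisVec {k : ℕ} (s : Fin k → Fin 3) (o : Fin k → Bool) : (Fin k → Fin 2) → ℂ :=
  fun a => ∏ t, bvec (s t) (o t) (a t)

/-- The tensor factor `⊗_i (3|b_{o_i}^{(s_i)}⟩⟨b_{o_i}^{(s_i)}| − I₂)` appearing in the
least-squares estimator for Pauli basis measurements. -/
def basisTensorFactor {k : ℕ} (s : Fin k → Fin 3) (o : Fin k → Bool) :
    Matrix (Fin k → Fin 2) (Fin k → Fin 2) ℂ :=
  fun a b => ∏ t, ((3 : ℂ) * bvec (s t) (o t) (a t) * star (bvec (s t) (o t) (b t)) -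
    if a t = b t then 1 else 0)

/-- The `k`-fold tensor power `D_{1/3}^{⊗k}` of the single-qubit depolarizing channel
`D_{1/3}(Y) = (1/3) Y + (1/3) tr(Y) I₂`, written in its Kraus form
`D_{1/3}(Y) = (1/2) Y + (1/6) Σ_{s ∈ {x,y,z}} σ_s Y σ_s`. -/
def depolK {k : ℕ} (X : Matrix (Fin k → Fin 2) (Fin k → Fin 2) ℂ) :
    Matrix (Fin k → Fin 2) (Fin k → Fin 2) ℂ :=
  ∑ g : Fin k → Fin 4,
    (∏ t, if g t = 0 then (2 : ℂ)⁻¹ else (6 : ℂ)⁻¹) • (pauliK g * X * pauliK g)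

/-- The one-qubit frame identity, as an identity between the coefficients of `Y c e` in the
`(a, b)` entries of `∑ ⟨b|Y|b⟩ |b⟩⟨b|` and of `3 D_{1/3}(Y)` in Kraus form. -/
lemma bvec_frame_entry (a b c e : Fin 2) :
    ∑ s : Fin 3, ∑ o : Bool,
        star (bvec s o c) * bvec s o e * (bvec s o a * star (bvec s o b)) =
      3 * ∑ g : Fin 4, (if g = 0 then (2 : ℂ)⁻¹ else (6 : ℂ)⁻¹) *
        (pauli1 g a c * pauli1 g e b) := by
  have h2 : (((Real.sqrt 2 : ℝ) : ℂ)⁻¹) ^ 2 = 1 / 2 := by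
    rw [inv_pow, ← Complex.ofReal_pow, Real.sq_sqrt (by norm_num)]
    norm_num
  have hI : Complex.I ^ 2 = -1 := Complex.I_sq
  fin_cases a <;> fin_cases b <;> fin_cases c <;> fin_cases e <;>
    simp [Fin.sum_univ_succ, bvec, pauli1] <;>
    generalize ((Real.sqrt 2 : ℝ) : ℂ)⁻¹ = r at * <;> grind

lemma sum_pull_coeff {ι m n : Type*} [Fintype ι] [Fintype m] [Fintype n] (X : Matrix m n ℂ)
    (f : ι → m → n → ℂ) :
    ∑ i, ∑ c, ∑ e, X c e * f i c e = ∑ c, ∑ e, X c e * ∑ i, f i c e := by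
  rw [Finset.sum_comm]
  refine Finset.sum_congr rfl fun c _ => ?_
  rw [Finset.sum_comm]
  simp only [Finset.mul_sum]

lemma frame_entry {k : ℕ} (X : Matrix (Fin k → Fin 2) (Fin k → Fin 2) ℂ)
    (a b : Fin k → Fin 2) (s : Fin k → Fin 3) (o : Fin k → Bool) :
    ((star (basisVec s o) ⬝ᵥ X.mulVec (basisVec s o)) • projOp (basisVec s o)) a b =
      ∑ c, ∑ e, X c e * ∏ t, (star (bvec (s t) (o t) (c t)) * bvec (s t) (o t) (e t) *
        (bvec (s t) (o t) (a t) * star (bvec (s t) (o t) (b t)))) := by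
  simp only [Matrix.smul_apply, projOp, vecMulVec_apply, dotProduct, mulVec, Pi.star_apply,
    basisVec, star_prod, smul_eq_mul, Finset.prod_mul_distrib, Finset.sum_mul, Finset.mul_sum]
  exact Finset.sum_congr rfl fun c _ => Finset.sum_congr rfl fun e _ => by ring

lemma depol_entry {k : ℕ} (X : Matrix (Fin k → Fin 2) (Fin k → Fin 2) ℂ)
    (a b : Fin k → Fin 2) (g : Fin k → Fin 4) :
    ((∏ t, if g t = 0 then (2 : ℂ)⁻¹ else (6 : ℂ)⁻¹) • (pauliK g * X * pauliK g)) a b =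
      ∑ c, ∑ e, X c e * ∏ t, ((if g t = 0 then (2 : ℂ)⁻¹ else (6 : ℂ)⁻¹) *
        (pauli1 (g t) (a t) (c t) * pauli1 (g t) (e t) (b t))) := by
  simp only [Matrix.smul_apply, Matrix.mul_apply, pauliK, smul_eq_mul,
    Finset.prod_mul_distrib, Finset.sum_mul, Finset.mul_sum]
  rw [Finset.sum_comm]
  exact Finset.sum_congr rfl fun c _ => Finset.sum_congr rfl fun e _ => by ring

/-- the frame identity for the union of all `3^k` Pauli product-basis
measurements: `Σ_{s,o} ⟨b_o^{(s)}|X|b_o^{(s)}⟩ |b_o^{(s)}⟩⟨b_o^{(s)}| = 3^k D_{1/3}^{⊗k}(X)`. -/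
theorem pauliBasis_frame_identity {k : ℕ} (X : Matrix (Fin k → Fin 2) (Fin k → Fin 2) ℂ) :
    ∑ s : Fin k → Fin 3, ∑ o : Fin k → Bool,
        (star (basisVec s o) ⬝ᵥ X.mulVec (basisVec s o)) • projOp (basisVec s o) =
      (3 : ℂ) ^ k • depolK X := by
  ext a b
  simp only [depolK, Matrix.sum_apply, Matrix.smul_apply (3 ^ k : ℂ), frame_entry, depol_entry]
  have hL : ∀ c e : Fin k → Fin 2,
      ∑ s : Fin k → Fin 3, ∑ o : Fin k → Bool,
        ∏ t, (star (bvec (s t) (o t) (c t)) * bvec (s t) (o t) (e t) *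
          (bvec (s t) (o t) (a t) * star (bvec (s t) (o t) (b t)))) =
      3 ^ k * ∑ g : Fin k → Fin 4, ∏ t, ((if g t = 0 then (2 : ℂ)⁻¹ else (6 : ℂ)⁻¹) *
        (pauli1 (g t) (a t) (c t) * pauli1 (g t) (e t) (b t))) := by
    intro c e
    have h := Finset.prod_congr (rfl : (Finset.univ : Finset (Fin k)) = Finset.univ)
      fun t _ => bvec_frame_entry (a t) (b t) (c t) (e t)
    rw [Finset.prod_mul_distrib, Finset.prod_const, Finset.card_univ, Fintype.card_fin] at h
    simpa only [Fintype.prod_sum] using h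
  simp only [sum_pull_coeff, hL, smul_eq_mul]
  simp only [Finset.mul_sum]
  exact Finset.sum_congr rfl fun c _ => Finset.sum_congr rfl fun e _ => by
    exact Finset.sum_congr rfl fun g _ => by ring

end
end
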